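/- arXiv:1612.04213 — 3 statements merged into one kernel-verified Lean document; each statement's English description precedes it below -/
import Mathlib

section
/- Let $l_0 > 0$ and let $(l_n)_{n\ge 1}$ be a strictly increasing sequence of positive real numbers with $l_n \to \infty$. For each $n \ge 1$ define $a_n = \operatorname{arcosh}\big((\cosh l_n + \cosh l_n \cosh l_0)/(\sinh l_n \sinh l_0)\big)$, $b_n = \operatorname{arcosh}\big((\cosh l_0 + \cosh^2 l_n)/\sinh^2 l_n\big)$, $c_n = \operatorname{arsinh}(\sinh a_n \cdot \cosh l_0)$, and $d_n = \operatorname{arsinh}(\sinh b_n \cdot \cosh l_n)$. Then there exists a constant $M > 0$ such that $a_n \le M$, $b_n \le M$, $c_n \le M$ and $d_n \le M$ for all $n \ge 1$. -/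
open Real Filter

/-- `arcosh x = log (x + √(x² - 1))`, the inverse of `cosh` on `[1, ∞)`. -/
noncomputable def arcosh (x : ℝ) : ℝ := Real.log (x + Real.sqrt (x ^ 2 - 1))

/-!
For fixed `l₀`, each of the four distances is antitone in the length `x` of the two equal sides, so
its value at `l 1` bounds the whole sequence. This rests on the monotonicity of `coth` and of
`1 / sinh`, since

* `cosh a = (1 + cosh l₀) / sinh l₀ * coth x`,
* `cosh b = 1 + (cosh l₀ + 1) / sinh x ^ 2`,
* `sinh b * cosh x = √((cosh l₀ + 1) * (cosh b + 1)) * coth x`.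

The last formula is the delicate one: `cosh x` is unbounded, and `sinh b` decays just fast enough
to compensate.
-/

lemma arcosh_eq_real_arcosh (x : ℝ) : _root_.arcosh x = Real.arcosh x := rfl

/-- In a right-angled hyperbolic hexagon with pairwise non-adjacent sides of lengths `p`, `q`, `r`,
the length of the side joining those of lengths `p` and `q`, as given by the law of cosines. -/
noncomputable def hexagonSide (p q r : ℝ) : ℝ :=
  Real.arcosh ((cosh r + cosh p * cosh q) / (sinh p * sinh q))

/-- In a hyperbolic quadrilateral with right angles at `A`, `B`, `C` and fourth vertex `D`, where
`AB = h` and `BD = q`, the length of `DC`, that is, the distance from `D` to the line `AC`. -/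
noncomputable def lambertSide (h q : ℝ) : ℝ :=
  arsinh (sinh h * cosh q)

lemma lambertSide_le_lambertSide {h h' q q' : ℝ} :
    lambertSide h q ≤ lambertSide h' q' ↔ sinh h * cosh q ≤ sinh h' * cosh q' :=
  arsinh_le_arsinh

lemma antitoneOn_cosh_div_sinh : AntitoneOn (fun x ↦ cosh x / sinh x) (Set.Ioi 0) := by
  intro x hx y hy hxy
  have h_sinh_sub : 0 ≤ sinh (y - x) := sinh_nonneg_iff.mpr (sub_nonneg.mpr hxy)
  rw [sinh_sub] at h_sinh_sub
  dsimp only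
  rw [div_le_div_iff₀ (sinh_pos_iff.mpr hy) (sinh_pos_iff.mpr hx)]
  linarith

section hexagonSide

variable {p q r x : ℝ}

lemma one_lt_cosh_add_div_sinh_mul_sinh (hp : 0 < p) (hq : 0 < q) (r : ℝ) :
    1 < (cosh r + cosh p * cosh q) / (sinh p * sinh q) := by
  have hsp : 0 < sinh p := sinh_pos_iff.mpr hp
  have hsq : 0 < sinh q := sinh_pos_iff.mpr hq
  rw [one_lt_div (mul_pos hsp hsq)]
  have h_cosh_sub := cosh_pos (p - q)
  rw [cosh_sub] at h_cosh_sub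
  linarith [cosh_pos r]

lemma cosh_hexagonSide (hp : 0 < p) (hq : 0 < q) (r : ℝ) :
    cosh (hexagonSide p q r) = (cosh r + cosh p * cosh q) / (sinh p * sinh q) :=
  cosh_arcosh (one_lt_cosh_add_div_sinh_mul_sinh hp hq r).le

lemma hexagonSide_pos (hp : 0 < p) (hq : 0 < q) (r : ℝ) : 0 < hexagonSide p q r :=
  arcosh_pos (one_lt_cosh_add_div_sinh_mul_sinh hp hq r)

lemma cosh_hexagonSide_le_cosh_hexagonSide {p' q' r' : ℝ} (hp : 0 < p) (hq : 0 < q)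
    (hp' : 0 < p') (hq' : 0 < q') :
    cosh (hexagonSide p q r) ≤ cosh (hexagonSide p' q' r') ↔
      hexagonSide p q r ≤ hexagonSide p' q' r' := by
  rw [cosh_le_cosh, abs_of_pos (hexagonSide_pos hp hq r), abs_of_pos (hexagonSide_pos hp' hq' r')]

lemma cosh_hexagonSide_self_outer (hx : 0 < x) (hq : 0 < q) :
    cosh (hexagonSide x q x) = (1 + cosh q) / sinh q * (cosh x / sinh x) := by
  rw [cosh_hexagonSide hx hq, div_mul_div_comm]
  ring

lemma cosh_hexagonSide_self (hx : 0 < x) (r : ℝ) :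
    cosh (hexagonSide x x r) = 1 + (cosh r + 1) / sinh x ^ 2 := by
  have hsx : sinh x ≠ 0 := (sinh_pos_iff.mpr hx).ne'
  rw [cosh_hexagonSide hx hx, ← sq, ← sq, cosh_sq x]
  field_simp
  ring

lemma sinh_hexagonSide_self_mul_cosh (hx : 0 < x) (r : ℝ) :
    sinh (hexagonSide x x r) * cosh x =
      √((cosh r + 1) * (cosh (hexagonSide x x r) + 1)) * (cosh x / sinh x) := by
  have hsx : 0 < sinh x := sinh_pos_iff.mpr hx
  have hsb : 0 < sinh (hexagonSide x x r) := sinh_pos_iff.mpr (hexagonSide_pos hx hx r)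
  have h_cosh_sub_one : (cosh (hexagonSide x x r) - 1) * sinh x ^ 2 = cosh r + 1 := by
    rw [cosh_hexagonSide_self hx]
    field_simp
    ring
  have h_sqrt : √((cosh r + 1) * (cosh (hexagonSide x x r) + 1)) =
      sinh (hexagonSide x x r) * sinh x := by
    rw [← Real.sqrt_sq (mul_pos hsb hsx).le, mul_pow, sinh_sq (hexagonSide x x r),
      ← h_cosh_sub_one]
    ring_nf
  rw [h_sqrt]
  field_simp

lemma antitoneOn_hexagonSide_self_outer (hq : 0 < q) :
    AntitoneOn (fun x ↦ hexagonSide x q x) (Set.Ioi 0) := by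
  intro x hx y hy hxy
  refine (cosh_hexagonSide_le_cosh_hexagonSide hy hq hx hq).mp ?_
  rw [cosh_hexagonSide_self_outer hx hq, cosh_hexagonSide_self_outer hy hq]
  gcongr ?_ * ?_
  exact antitoneOn_cosh_div_sinh hx hy hxy

lemma antitoneOn_hexagonSide_self (r : ℝ) :
    AntitoneOn (fun x ↦ hexagonSide x x r) (Set.Ioi 0) := by
  intro x hx y hy hxy
  have hsx : 0 < sinh x := sinh_pos_iff.mpr hx
  refine (cosh_hexagonSide_le_cosh_hexagonSide hy hy hx hx).mp ?_
  rw [cosh_hexagonSide_self hx, cosh_hexagonSide_self hy]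
  gcongr
  exact sinh_le_sinh.mpr hxy

lemma antitoneOn_lambertSide_hexagonSide_self_outer (hq : 0 < q) :
    AntitoneOn (fun x ↦ lambertSide (hexagonSide x q x) q) (Set.Ioi 0) := by
  intro x hx y hy hxy
  refine lambertSide_le_lambertSide.mpr ?_
  gcongr
  exact sinh_le_sinh.mpr (antitoneOn_hexagonSide_self_outer hq hx hy hxy)

lemma antitoneOn_lambertSide_hexagonSide_self (r : ℝ) :
    AntitoneOn (fun x ↦ lambertSide (hexagonSide x x r) x) (Set.Ioi 0) := by
  intro x hx y hy hxy
  have h_coth : cosh y / sinh y ≤ cosh x / sinh x := antitoneOn_cosh_div_sinh hx hy hxy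
  have h_cosh : cosh (hexagonSide y y r) ≤ cosh (hexagonSide x x r) :=
    (cosh_hexagonSide_le_cosh_hexagonSide hy hy hx hx).mpr
      (antitoneOn_hexagonSide_self r hx hy hxy)
  have hsy : 0 < sinh y := sinh_pos_iff.mpr hy
  refine lambertSide_le_lambertSide.mpr ?_
  rw [sinh_hexagonSide_self_mul_cosh hx, sinh_hexagonSide_self_mul_cosh hy]
  gcongr

end hexagonSide

theorem stmt_0_general {l₀ s : ℝ} (hl₀ : 0 < l₀) (hs : 0 < s) :
    ∃ M : ℝ, 0 < M ∧ ∀ ⦃x a b c d : ℝ⦄, s ≤ x →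
      a = _root_.arcosh ((cosh x + cosh x * cosh l₀) / (sinh x * sinh l₀)) →
      b = _root_.arcosh ((cosh l₀ + cosh x ^ 2) / sinh x ^ 2) →
      c = arsinh (sinh a * cosh l₀) → d = arsinh (sinh b * cosh x) →
      a ≤ M ∧ b ≤ M ∧ c ≤ M ∧ d ≤ M := by
  let a₀ := hexagonSide s l₀ s
  let b₀ := hexagonSide s s l₀
  refine ⟨max (max a₀ b₀) (max (lambertSide a₀ l₀) (lambertSide b₀ s)),
    lt_max_of_lt_left (lt_max_of_lt_left (hexagonSide_pos hs hl₀ s)), ?_⟩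
  intro x a b c d hsx ha hb hc hd
  have hx : 0 < x := hs.trans_le hsx
  have ha' : a = hexagonSide x l₀ x := by rw [ha, arcosh_eq_real_arcosh, hexagonSide]
  have hb' : b = hexagonSide x x l₀ := by rw [hb, arcosh_eq_real_arcosh, hexagonSide, sq, sq]
  have hc' : c = lambertSide (hexagonSide x l₀ x) l₀ := by rw [hc, ha', lambertSide]
  have hd' : d = lambertSide (hexagonSide x x l₀) x := by rw [hd, hb', lambertSide]
  rw [ha', hb', hc', hd']
  refine ⟨le_max_of_le_left (le_max_of_le_left ?_), le_max_of_le_left (le_max_of_le_right ?_),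
    le_max_of_le_right (le_max_of_le_left ?_), le_max_of_le_right (le_max_of_le_right ?_)⟩
  · exact antitoneOn_hexagonSide_self_outer hl₀ hs hx hsx
  · exact antitoneOn_hexagonSide_self l₀ hs hx hsx
  · exact antitoneOn_lambertSide_hexagonSide_self_outer hl₀ hs hx hsx
  · exact antitoneOn_lambertSide_hexagonSide_self l₀ hs hx hsx

/-- the four vertex-to-side distances in the right-angled hexagons with
pairwise non-adjacent side lengths `l 0, l n, l n` are uniformly bounded. -/
theorem stmt_0 (l : ℕ → ℝ) (hl0 : 0 < l 0)
    (hpos : ∀ n, 1 ≤ n → 0 < l n)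
    (hmono : ∀ m n, 1 ≤ m → m < n → l m < l n)
    (htend : Tendsto l atTop atTop)
    (a b c d : ℕ → ℝ)
    (ha : ∀ n, 1 ≤ n → a n =
      _root_.arcosh ((Real.cosh (l n) + Real.cosh (l n) * Real.cosh (l 0)) /
        (Real.sinh (l n) * Real.sinh (l 0))))
    (hb : ∀ n, 1 ≤ n → b n =
      _root_.arcosh ((Real.cosh (l 0) + Real.cosh (l n) ^ 2) / Real.sinh (l n) ^ 2))
    (hc : ∀ n, 1 ≤ n → c n = Real.arsinh (Real.sinh (a n) * Real.cosh (l 0)))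
    (hd : ∀ n, 1 ≤ n → d n = Real.arsinh (Real.sinh (b n) * Real.cosh (l n))) :
    ∃ M : ℝ, 0 < M ∧ ∀ n, 1 ≤ n → a n ≤ M ∧ b n ≤ M ∧ c n ≤ M ∧ d n ≤ M := by
  obtain ⟨M, hM, hbound⟩ := stmt_0_general hl0 (hpos 1 le_rfl)
  have hle : ∀ n, 1 ≤ n → l 1 ≤ l n := fun n hn ↦
    hn.eq_or_lt.elim (fun h ↦ (congrArg l h).le) fun h ↦ (hmono 1 n le_rfl h).le
  exact ⟨M, hM, fun n hn ↦ hbound (hle n hn) (ha n hn) (hb n hn) (hc n hn) (hd n hn)⟩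
end

section
/- For each integer $i \ge 0$, let $l_i$ be the unique positive real number with $\log \coth(l_i/4) = 2^{-i}$. Set $d_0 = \log 2 + \log \coth(l_1/4)$ and, for $i \ge 1$, $d_i = \log \coth(l_i/4) + \log \coth(l_{i+1}/4)$. Then there exists a constant $M > 0$ such that for every $n \ge 1$, $\sinh\Big(\sum_{i=n-1}^{\infty} d_i\Big) \cdot \cosh(l_n/2) \le M$. -/
open Real

/-!
The map `x ↦ log coth (x / 2)` is an involution of the positive reals: writing `t` for its value at
`x`, one has `cosh x * sinh t = cosh t`, hence `t * cosh x ≤ cosh t`. For `x = l n / 2` and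
`t = r ^ n` this says that `cosh (l n / 2)` grows at most like `r ^ (-n)`. The tail of the
geometrically bounded gap series is at most a constant times `r ^ n`, and by convexity so is its
`sinh`; the product of the two is therefore bounded.
-/

theorem convexOn_sinh : ConvexOn ℝ (Set.Ici 0) sinh := by
  refine MonotoneOn.convexOn_of_deriv (convex_Ici 0) continuous_sinh.continuousOn
    differentiable_sinh.differentiableOn ?_
  rw [Real.deriv_sinh]
  exact cosh_strictMonoOn.monotoneOn.mono interior_subset

theorem sinh_mul_le_mul_sinh {t c : ℝ} (ht₀ : 0 ≤ t) (ht₁ : t ≤ 1) (hc : 0 ≤ c) :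
    sinh (t * c) ≤ t * sinh c := by
  simpa using convexOn_sinh.2 Set.self_mem_Ici hc (sub_nonneg.2 ht₁) ht₀ (sub_add_cancel 1 t)

theorem cosh_mul_sinh_log_coth_half {x : ℝ} (hx : 0 < x) :
    cosh x * sinh (log (cosh (x / 2) / sinh (x / 2))) =
      cosh (log (cosh (x / 2) / sinh (x / 2))) := by
  have hsinh : 0 < sinh (x / 2) := sinh_pos_iff.2 (half_pos hx)
  have hcosh : 0 < cosh (x / 2) := cosh_pos _
  have hdouble : cosh x = cosh (x / 2) ^ 2 + sinh (x / 2) ^ 2 := by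
    rw [← cosh_two_mul, mul_div_cancel₀ x two_ne_zero]
  rw [sinh_log (div_pos hcosh hsinh), cosh_log (div_pos hcosh hsinh), hdouble]
  field_simp
  rw [cosh_sq]
  ring

theorem log_coth_half_mul_cosh_le {x : ℝ} (hx : 0 < x)
    (hlog : 0 ≤ log (cosh (x / 2) / sinh (x / 2))) :
    log (cosh (x / 2) / sinh (x / 2)) * cosh x ≤ cosh (log (cosh (x / 2) / sinh (x / 2))) := by
  rw [← cosh_mul_sinh_log_coth_half hx, mul_comm]
  exact mul_le_mul_of_nonneg_left (self_le_sinh_iff.2 hlog) (cosh_pos x).le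

theorem sinh_mul_cosh_le_of_le_log_coth_half_mul {x s t c : ℝ} (hx : 0 < x) (hc : 0 ≤ c)
    (ht : log (cosh (x / 2) / sinh (x / 2)) = t) (ht₀ : 0 ≤ t) (ht₁ : t ≤ 1) (hs : s ≤ t * c) :
    sinh s * cosh x ≤ sinh c * cosh 1 := by
  have hsinh : sinh s ≤ t * sinh c :=
    (sinh_le_sinh.2 hs).trans (sinh_mul_le_mul_sinh ht₀ ht₁ hc)
  have hcosh : t * cosh x ≤ cosh t := by
    subst ht
    exact log_coth_half_mul_cosh_le hx ht₀
  calc sinh s * cosh x ≤ t * sinh c * cosh x := by gcongr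
    _ = sinh c * (t * cosh x) := by ring
    _ ≤ sinh c * cosh 1 := by
      have hmono : cosh t ≤ cosh 1 := cosh_le_cosh.2 (by rwa [abs_of_nonneg ht₀, abs_one])
      exact mul_le_mul_of_nonneg_left (hcosh.trans hmono) (sinh_nonneg_iff.2 hc)

theorem norm_tsum_add_le_of_norm_le_geometric {E : Type*} [SeminormedAddCommGroup E] {f : ℕ → E}
    {C r : ℝ} (hr : |r| < 1) (hf : ∀ i, ‖f i‖ ≤ C * r ^ i) (k : ℕ) :
    ‖∑' i, f (k + i)‖ ≤ C * r ^ k / (1 - r) := by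
  refine tsum_of_norm_bounded ((hasSum_geometric_of_abs_lt_one hr).mul_left (C * r ^ k)) fun i ↦ ?_
  simpa only [pow_add, mul_assoc] using hf (k + i)

theorem norm_le_two_mul_pow_of_eq_add {d : ℕ → ℝ} {r : ℝ} (hr₀ : 0 ≤ r) (hr₁ : r ≤ 1)
    (hd0 : d 0 = log 2 + r) (hd : ∀ i, 1 ≤ i → d i = r ^ i + r ^ (i + 1)) (i : ℕ) :
    ‖d i‖ ≤ 2 * r ^ i := by
  obtain rfl | hi := Nat.eq_zero_or_pos i
  · have hlog_le : log 2 ≤ 1 := log_two_lt_d9.le.trans (by norm_num)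
    rw [hd0, norm_of_nonneg (add_nonneg (log_nonneg one_le_two) hr₀), pow_zero]
    linarith
  · rw [hd i hi, norm_of_nonneg (by positivity), two_mul]
    exact add_le_add_right (pow_le_pow_of_le_one hr₀ hr₁ i.le_succ) _

theorem stmt_7_general {r : ℝ} (hr₀ : 0 < r) (hr₁ : r < 1) (l : ℕ → ℝ) (hl : ∀ i, 0 < l i)
    (hcoth : ∀ i, log (cosh (l i / 4) / sinh (l i / 4)) = r ^ i) (d : ℕ → ℝ)
    (hd0 : d 0 = log 2 + log (cosh (l 1 / 4) / sinh (l 1 / 4)))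
    (hd : ∀ i, 1 ≤ i → d i = log (cosh (l i / 4) / sinh (l i / 4)) +
      log (cosh (l (i + 1) / 4) / sinh (l (i + 1) / 4))) :
    ∃ M : ℝ, 0 < M ∧ ∀ n : ℕ, 1 ≤ n → sinh (∑' i, d (n - 1 + i)) * cosh (l n / 2) ≤ M := by
  have hr₁' : 0 < 1 - r := sub_pos.2 hr₁
  have hc : 0 < 2 / (r * (1 - r)) := by positivity
  have hgap : ∀ i, ‖d i‖ ≤ 2 * r ^ i := by
    simp only [hcoth, pow_one] at hd0 hd
    exact norm_le_two_mul_pow_of_eq_add hr₀.le hr₁.le hd0 hd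
  refine ⟨sinh (2 / (r * (1 - r))) * cosh 1, mul_pos (sinh_pos_iff.2 hc) (cosh_pos 1), ?_⟩
  rintro (_ | n) hn
  · contradiction
  have htail : ∑' i, d (n + i) ≤ r ^ (n + 1) * (2 / (r * (1 - r))) := by
    calc ∑' i, d (n + i) ≤ 2 * r ^ n / (1 - r) := (le_norm_self _).trans <|
          norm_tsum_add_le_of_norm_le_geometric (abs_lt.2 ⟨by linarith, hr₁⟩) hgap n
      _ = r ^ (n + 1) * (2 / (r * (1 - r))) := by
        rw [pow_succ]
        field_simp
  have hlog : log (cosh (l (n + 1) / 2 / 2) / sinh (l (n + 1) / 2 / 2)) = r ^ (n + 1) := by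
    rw [← hcoth (n + 1), div_div, show (2 * 2 : ℝ) = 4 by norm_num]
  exact sinh_mul_cosh_le_of_le_log_coth_half_mul (half_pos (hl _)) hc.le hlog (by positivity)
    (pow_le_one₀ hr₀.le hr₁.le) htail

/-- with `log coth(lᵢ/4) = 2⁻ⁱ` and the Basmajian gap distances `dᵢ`,
the quantities `sinh(∑_{i ≥ n-1} dᵢ) cosh(lₙ/2)` are uniformly bounded. -/
theorem stmt_7 (l : ℕ → ℝ) (hl : ∀ i, 0 < l i)
    (hcoth : ∀ i : ℕ, Real.log (Real.cosh (l i / 4) / Real.sinh (l i / 4)) =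
      1 / 2 ^ i)
    (d : ℕ → ℝ)
    (hd0 : d 0 = Real.log 2 +
      Real.log (Real.cosh (l 1 / 4) / Real.sinh (l 1 / 4)))
    (hd : ∀ i, 1 ≤ i → d i =
      Real.log (Real.cosh (l i / 4) / Real.sinh (l i / 4)) +
        Real.log (Real.cosh (l (i + 1) / 4) / Real.sinh (l (i + 1) / 4))) :
    ∃ M : ℝ, 0 < M ∧ ∀ n : ℕ, 1 ≤ n →
      Real.sinh (∑' i : ℕ, d (n - 1 + i)) * Real.cosh (l n / 2) ≤ M := by
  simp only [← one_div_pow] at hcoth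
  exact stmt_7_general one_half_pos one_half_lt_one l hl hcoth d hd0 hd
end

section
/- Let $\theta \in (0, \pi/2)$ and let $a, b, \alpha, \beta, L$ be positive real numbers satisfying $\cosh \alpha \cdot \sin \theta = 2$, $\cosh a = \cosh \alpha \cdot \sin \theta$, $\cos \theta = \sinh a \cdot \sinh b$, $\cosh a / \cosh b = \cosh \alpha / \cosh \beta$, and $\sinh L = \sin \theta \cdot \sinh \beta$. Then $L < \operatorname{arsinh} 2$. -/
open Real

/-! In a trirectangle the formula `cosh a = cosh α * sin θ` has the mirror form
`cosh b = cosh β * sin θ`, so `sinh L = sin θ * sinh β < sin θ * cosh β = cosh b`. On the other hand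
`sinh a * sinh b = cos θ ≤ 1` says `cosh b ≤ coth a`, whence `L < arsinh (coth a)`.
For `cosh a = 2` one has `sinh a = √3`, so `coth a ≤ cosh a = 2`. -/

theorem abs_sinh_mul_cosh_le_cosh_iff {x y : ℝ} :
    |sinh x * cosh y| ≤ cosh x ↔ |sinh x * sinh y| ≤ 1 := by
  have hsq : (sinh x * cosh y) ^ 2 = sinh x ^ 2 + (sinh x * sinh y) ^ 2 := by
    rw [mul_pow, cosh_sq]
    ring
  rw [← sq_le_one_iff_abs_le_one, ← abs_of_pos (cosh_pos x), ← sq_le_sq, hsq, cosh_sq,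
    add_le_add_iff_left]

theorem cosh_le_cosh_div_sinh {x y : ℝ} (hx : 0 < x) (hxy : |sinh x * sinh y| ≤ 1) :
    cosh y ≤ cosh x / sinh x := by
  rw [le_div_iff₀' (sinh_pos_iff.2 hx)]
  exact (le_abs_self _).trans (abs_sinh_mul_cosh_le_cosh_iff.2 hxy)

theorem one_le_sinh_iff_two_le_cosh_sq {x : ℝ} (hx : 0 ≤ x) : 1 ≤ sinh x ↔ 2 ≤ cosh x ^ 2 := by
  rw [← one_le_sq_iff₀ (sinh_nonneg_iff.2 hx), cosh_sq, ← sub_le_iff_le_add]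
  norm_num

theorem cosh_div_sinh_le_cosh {x : ℝ} (hx : 0 ≤ x) (hcosh : 2 ≤ cosh x ^ 2) :
    cosh x / sinh x ≤ cosh x :=
  div_le_self (cosh_pos x).le ((one_le_sinh_iff_two_le_cosh_sq hx).2 hcosh)

theorem cosh_eq_cosh_mul_of_div_eq_div {a b α β s : ℝ} (hcosh : cosh a = cosh α * s)
    (hratio : cosh a / cosh b = cosh α / cosh β) : cosh b = cosh β * s := by
  rw [div_eq_div_iff (cosh_pos b).ne' (cosh_pos β).ne', hcosh] at hratio
  exact mul_left_cancel₀ (cosh_pos α).ne' (by linarith)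

theorem stmt_13_general {θ a b α β L : ℝ} (hθ : 0 < sin θ) (ha : 0 < a)
    (hcosha : cosh a = cosh α * sin θ) (hcos : cos θ = sinh a * sinh b)
    (hratio : cosh a / cosh b = cosh α / cosh β) (hsinhL : sinh L = sin θ * sinh β) :
    L < arsinh (cosh a / sinh a) := by
  rw [← sinh_lt_sinh, sinh_arsinh]
  calc sinh L = sin θ * sinh β := hsinhL
    _ < sin θ * cosh β := mul_lt_mul_of_pos_left (sinh_lt_cosh β) hθ
    _ = cosh b := by rw [cosh_eq_cosh_mul_of_div_eq_div hcosha hratio, mul_comm]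
    _ ≤ cosh a / sinh a := cosh_le_cosh_div_sinh ha (hcos ▸ abs_cos_le_one θ)

/-- in a hyperbolic trirectangle with acute angle `θ`, consecutive
sides `α, b, a, β`, normalization `cosh α sin θ = 2`, and perpendicular `L` with
`sinh L = sin θ sinh β`, one has `L < arsinh 2`. -/
theorem stmt_13 (θ a b α β L : ℝ) (hθ0 : 0 < θ) (hθ : θ < Real.pi / 2)
    (ha : 0 < a) (hb : 0 < b) (hα : 0 < α) (hβ : 0 < β) (hL : 0 < L)
    (hnorm : Real.cosh α * Real.sin θ = 2)
    (hcosha : Real.cosh a = Real.cosh α * Real.sin θ)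
    (hcos : Real.cos θ = Real.sinh a * Real.sinh b)
    (hratio : Real.cosh a / Real.cosh b = Real.cosh α / Real.cosh β)
    (hsinhL : Real.sinh L = Real.sin θ * Real.sinh β) :
    L < Real.arsinh 2 := by
  have hsin : 0 < sin θ := sin_pos_of_pos_of_lt_pi hθ0 (by linarith)
  have hcosh : cosh a = 2 := hcosha.trans hnorm
  have hcoth : cosh a / sinh a ≤ 2 :=
    (cosh_div_sinh_le_cosh ha.le (by norm_num [hcosh])).trans_eq hcosh
  exact (stmt_13_general hsin ha hcosha hcos hratio hsinhL).trans_le (arsinh_le_arsinh.2 hcoth)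
end
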